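/- Let t ≥ m ≥ 1 and n ≥ 1 be integers and let q ∈ ℂ with 0 < |q| < 1. Then Σ_{ℓ=0}^{n} [ q^{(t+1)ℓ^2 - ℓ} (1 - q^{2ℓ}) / ((q;q)_{n-ℓ} (q;q)_{n+ℓ}) ] · Σ_{k=-ℓ}^{ℓ-1} (-1)^k q^{-(2t+1)k(k+1)/2 + m k} = Σ_{n ≥ n_{2t-1} ≥ n_{2t-2} ≥ … ≥ n_1 ≥ 0} (-1)^{n_t} (1 - q^{n_t - χ(t > m)·n_{t-m}}) · q^{Σ_{i=1}^{t-1} n_{t+i}^2 + n_t(n_t-1)/2 - Σ_{i=1}^{t-1} n_i n_{i+1} - Σ_{i=1}^{t-m-1} n_i} / ( (q;q)_{n - n_{2t-1}} (q;q)_{n_{2t-1} - n_{2t-2}} ⋯ (q;q)_{n_2 - n_1} (q;q)_{n_1} ), where the right-hand sum is over all weakly decreasing (2t-1)-tuples of nonnegative integers bounded above by n. (The left-hand side equals -q^{t-n} C_{n-1}^{(t,m)}(q), the coefficient in the cyclotomic expansion of the analogue J_N^{(t,m)} of the colored Jones polynomial.) -/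

import Mathlib

open Finset

/-- The finite q-Pochhammer symbol `(a;q)_n`. -/
noncomputable def qPoch (q a : ℂ) (n : ℕ) : ℂ := ∏ j ∈ Finset.range n, (1 - a * q ^ j)

/-- The summand of the right-hand multisum, for a weakly decreasing tuple
`n ≥ n_{2T-1} ≥ … ≥ n_1 ≥ 0`; here the paper's `t, m` equal `t+1, m+1`, the tuple
has length `2t+1`, and `A j = n_{j+1}` (0-based).  Note `χ(T > M)` becomes
`χ(t > m)`, the index `T - M` becomes `t - m` (0-based: `t - m - 1`), and
`Σ_{i=1}^{T-M-1} n_i` becomes a sum of `t - m - 1` terms. -/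
noncomputable def CTermM (q : ℂ) (t m n : ℕ) (A : ℕ → ℕ) : ℂ :=
  (-1 : ℂ) ^ (A t) *
  (1 - q ^ ((A t : ℤ) - (if m < t then (A (t - m - 1) : ℤ) else 0))) *
  q ^ ((∑ i ∈ Finset.range t, (A (t + 1 + i) : ℤ) ^ 2)
      + (A t : ℤ) * ((A t : ℤ) - 1) / 2
      - (∑ i ∈ Finset.range t, (A i : ℤ) * (A (i + 1) : ℤ))
      - (∑ i ∈ Finset.range (t - m - 1), (A i : ℤ))) /
  (qPoch q q (n - A (2 * t)) *
    (∏ i ∈ Finset.range (2 * t), qPoch q q (A (i + 1) - A i)) *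
    qPoch q q (A 0))


noncomputable def iq (q : ℂ) (n : ℤ) : ℂ := if n < 0 then 0 else (qPoch q q n.toNat)⁻¹

lemma iq_neg (q : ℂ) {n : ℤ} (h : n < 0) : iq q n = 0 := by simp [iq, h]

lemma iq_nat (q : ℂ) (n : ℕ) : iq q (n : ℤ) = (qPoch q q n)⁻¹ := by
  have : ¬ ((n : ℤ) < 0) := by omega
  simp [iq, this]

lemma iq_zero (q : ℂ) : iq q 0 = 1 := by simp [iq, qPoch]

lemma one_sub_ne (q : ℂ) (hq1 : ‖q‖ < 1) (n : ℕ) : 1 - q ^ (n + 1) ≠ 0 := by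
  intro h
  have h1 : q ^ (n + 1) = 1 := by linear_combination -h
  have h2 : ‖q‖ ^ (n + 1) = 1 := by rw [← norm_pow, h1, norm_one]
  have h3 : ‖q‖ ^ (n + 1) < 1 := pow_lt_one₀ (norm_nonneg q) hq1 (by omega)
  linarith

lemma iq_rec (q : ℂ) (hq1 : ‖q‖ < 1) (n : ℤ) : (1 - q ^ n) * iq q n = iq q (n - 1) := by
  rcases lt_trichotomy n 0 with h | h | h
  · rw [iq_neg q h, iq_neg q (by omega)]; simp
  · subst h; rw [iq_neg q (by omega : (0 : ℤ) - 1 < 0)]; simp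
  · obtain ⟨k, rfl⟩ : ∃ k : ℕ, n = ((k + 1 : ℕ) : ℤ) := ⟨(n - 1).toNat, by omega⟩
    have e : ((k + 1 : ℕ) : ℤ) - 1 = (k : ℕ) := by push_cast; ring
    rw [e, iq_nat, iq_nat, zpow_natCast]
    have : qPoch q q (k + 1) = qPoch q q k * (1 - q ^ (k + 1)) := by
      unfold qPoch
      rw [Finset.prod_range_succ, pow_succ']
    rw [this, mul_inv]
    have := one_sub_ne q hq1 k
    field_simp

def tri (s : ℤ) : ℤ := s * (s + 1) / 2

lemma two_tri (s : ℤ) : 2 * tri s = s * (s + 1) :=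
  Int.mul_ediv_cancel' (Int.even_mul_succ_self s).two_dvd

lemma half {a b : ℤ} (h : 2 * a = 2 * b) : a = b := by omega

lemma invVan (q : ℂ) (hq : q ≠ 0) (hq1 : ‖q‖ < 1) (A : ℕ) : ∀ D : ℤ,
    ∑ K ∈ range (A + 1), (-1 : ℂ) ^ ((A : ℤ) - K) * q ^ (tri ((A : ℤ) - K - 1)) *
      iq q (A - K) * iq q K * iq q (K + D) = q ^ ((A : ℤ) * (A + D)) * iq q A * iq q (A + D) := by
  induction A with
  | zero => intro D; simp [iq_zero, tri]
  | succ A ih =>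
    intro D
    have hne := one_sub_ne q hq1 A
    have e1 : ((A + 1 : ℕ) : ℤ) - 1 = A := by push_cast; ring
    have hr := iq_rec q hq1 ((A + 1 : ℕ) : ℤ)
    rw [e1, zpow_natCast] at hr
    apply mul_left_cancel₀ hne
    have key : (1 - q ^ (A + 1)) * (∑ K ∈ range (A + 1 + 1), (-1 : ℂ) ^ (((A + 1 : ℕ) : ℤ) - K) *
        q ^ (tri (((A + 1 : ℕ) : ℤ) - K - 1)) *
        iq q (((A + 1 : ℕ) : ℤ) - K) * iq q K * iq q (K + D))
        = q ^ ((A : ℤ) + 1 + D) * ∑ K ∈ range (A + 1), (-1 : ℂ) ^ ((A : ℤ) - K) * q ^ (tri ((A : ℤ) - K - 1)) *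
      iq q (A - K) * iq q K * iq q (K + (D + 1)) := by
      have : ∀ K : ℕ, (1 - q ^ (A + 1)) * ((-1 : ℂ) ^ (((A + 1 : ℕ) : ℤ) - K) *
        q ^ (tri (((A + 1 : ℕ) : ℤ) - K - 1)) *
        iq q (((A + 1 : ℕ) : ℤ) - K) * iq q K * iq q (K + D)) =
        (-1 : ℂ) ^ (((A + 1 : ℕ) : ℤ) - K) * q ^ (tri (((A + 1 : ℕ) : ℤ) - K - 1)) *
          iq q ((A : ℤ) - K) * iq q K * iq q (K + D) +
        (-1 : ℂ) ^ (((A + 1 : ℕ) : ℤ) - K) * q ^ (tri (((A + 1 : ℕ) : ℤ) - K)) *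
          iq q (((A + 1 : ℕ) : ℤ) - K) * iq q ((K : ℤ) - 1) * iq q (K + D) := by
        intro K
        have h1 := iq_rec q hq1 (((A + 1 : ℕ) : ℤ) - K)
        have h2 := iq_rec q hq1 (K : ℤ)
        have e2 : ((A + 1 : ℕ) : ℤ) - K - 1 = A - K := by push_cast; ring
        rw [e2] at h1
        have h3 : tri (((A + 1 : ℕ) : ℤ) - K) = tri (((A + 1 : ℕ) : ℤ) - K - 1) + (((A + 1 : ℕ) : ℤ) - K) := by
          apply half; rw [mul_add, two_tri, two_tri]; ring
        have h4 : q ^ (A + 1) = q ^ (((A + 1 : ℕ) : ℤ) - K) * q ^ (K : ℤ) := by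
          rw [← zpow_add₀ hq, sub_add_cancel, zpow_natCast]
        rw [h3, zpow_add₀ hq, ← h1, ← h2, h4]
        ring
      rw [Finset.mul_sum, Finset.sum_congr rfl (fun K _ => this K), Finset.sum_add_distrib,
        Finset.sum_range_succ, Finset.sum_range_succ' _ (A + 1), iq_neg q (by push_cast; omega : (A : ℤ) - ((A + 1 : ℕ) : ℤ) < 0),
        iq_neg q (by simp : ((0 : ℕ) : ℤ) - 1 < 0)]
      simp only [mul_zero, zero_mul, add_zero]
      rw [← Finset.sum_add_distrib, Finset.mul_sum]
      apply Finset.sum_congr rfl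
      intro K _
      have h1 := iq_rec q hq1 ((K : ℤ) + (D + 1))
      have a1 : (K : ℤ) + (D + 1) - 1 = K + D := by ring
      have a2 : ((A + 1 : ℕ) : ℤ) - K - 1 = A - K := by push_cast; ring
      have a3 : ((A + 1 : ℕ) : ℤ) - ((K + 1 : ℕ) : ℤ) = A - K := by push_cast; ring
      have a4 : ((K + 1 : ℕ) : ℤ) - 1 = K := by push_cast; ring
      have a5 : ((K + 1 : ℕ) : ℤ) + D = K + (D + 1) := by push_cast; ring
      have a6 : ((A + 1 : ℕ) : ℤ) - K = (A - K) + 1 := by push_cast; ring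
      rw [a1] at h1
      rw [a2, a3, a4, a5, a6, ← h1, zpow_add₀ (by norm_num : (-1 : ℂ) ≠ 0)]
      have h3 : tri ((A : ℤ) - K) + (K + (D + 1)) = tri ((A : ℤ) - K - 1) + ((A : ℤ) + 1 + D) := by
        have t1 := two_tri ((A : ℤ) - K); have t2 := two_tri ((A : ℤ) - K - 1); apply half; linear_combination t1 - t2
      have h5 : q ^ (tri ((A : ℤ) - K)) * q ^ ((K : ℤ) + (D + 1)) = q ^ (tri ((A : ℤ) - K - 1)) * q ^ ((A : ℤ) + 1 + D) := by
        rw [← zpow_add₀ hq, ← zpow_add₀ hq, h3]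
      linear_combination (-1 : ℂ) ^ ((A : ℤ) - K) * iq q (A - K) * iq q K * iq q (K + (D + 1)) * h5
    rw [key, ih (D + 1), ← hr]
    have a1 : (A : ℤ) + (D + 1) = ((A + 1 : ℕ) : ℤ) + D := by push_cast; ring
    have a2 : ((A + 1 : ℕ) : ℤ) * (((A + 1 : ℕ) : ℤ) + D) = ((A : ℤ) + 1 + D) + (A : ℤ) * (((A + 1 : ℕ) : ℤ) + D) := by
      push_cast; ring
    rw [a1, a2, zpow_add₀ hq ((A : ℤ) + 1 + D)]
    ring

lemma fwdVan (q : ℂ) (hq : q ≠ 0) (hq1 : ‖q‖ < 1) (A : ℕ) : ∀ D : ℤ,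
    ∑ K ∈ range (A + 1), q ^ ((K : ℤ) * (K + D)) *
      iq q (A - K) * iq q K * iq q (K + D) = iq q A * iq q (A + D) := by
  induction A with
  | zero => intro D; simp [iq_zero]
  | succ A ih =>
    intro D
    have hne := one_sub_ne q hq1 A
    have e1 : ((A + 1 : ℕ) : ℤ) - 1 = A := by push_cast; ring
    have hr := iq_rec q hq1 ((A + 1 : ℕ) : ℤ)
    rw [e1, zpow_natCast] at hr
    apply mul_left_cancel₀ hne
    have key : (1 - q ^ (A + 1)) * (∑ K ∈ range (A + 1 + 1), q ^ ((K : ℤ) * (K + D)) *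
        iq q (((A + 1 : ℕ) : ℤ) - K) * iq q K * iq q (K + D))
        = ∑ K ∈ range (A + 1), q ^ ((K : ℤ) * (K + (D + 1))) *
      iq q (A - K) * iq q K * iq q (K + (D + 1)) := by
      have : ∀ K : ℕ, (1 - q ^ (A + 1)) * (q ^ ((K : ℤ) * (K + D)) *
        iq q (((A + 1 : ℕ) : ℤ) - K) * iq q K * iq q (K + D)) =
        q ^ ((K : ℤ) * (K + D) + K) *
          iq q ((A : ℤ) - K) * iq q K * iq q (K + D) +
        q ^ ((K : ℤ) * (K + D)) *
          iq q (((A + 1 : ℕ) : ℤ) - K) * iq q ((K : ℤ) - 1) * iq q (K + D) := by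
        intro K
        have h1 := iq_rec q hq1 (((A + 1 : ℕ) : ℤ) - K)
        have h2 := iq_rec q hq1 (K : ℤ)
        have e2 : ((A + 1 : ℕ) : ℤ) - K - 1 = A - K := by push_cast; ring
        rw [e2] at h1
        have h4 : q ^ (A + 1) = q ^ (((A + 1 : ℕ) : ℤ) - K) * q ^ (K : ℤ) := by
          rw [← zpow_add₀ hq, sub_add_cancel, zpow_natCast]
        rw [zpow_add₀ hq, ← h1, ← h2, h4]
        ring
      rw [Finset.mul_sum, Finset.sum_congr rfl (fun K _ => this K), Finset.sum_add_distrib,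
        Finset.sum_range_succ, Finset.sum_range_succ' _ (A + 1), iq_neg q (by push_cast; omega : (A : ℤ) - ((A + 1 : ℕ) : ℤ) < 0),
        iq_neg q (by simp : ((0 : ℕ) : ℤ) - 1 < 0)]
      simp only [mul_zero, zero_mul, add_zero]
      rw [← Finset.sum_add_distrib]
      apply Finset.sum_congr rfl
      intro K _
      have h1 := iq_rec q hq1 ((K : ℤ) + (D + 1))
      have a1 : (K : ℤ) + (D + 1) - 1 = K + D := by ring
      have a3 : ((A + 1 : ℕ) : ℤ) - ((K + 1 : ℕ) : ℤ) = A - K := by push_cast; ring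
      have a4 : ((K + 1 : ℕ) : ℤ) - 1 = K := by push_cast; ring
      have a5 : ((K + 1 : ℕ) : ℤ) + D = K + (D + 1) := by push_cast; ring
      have a6 : ((K + 1 : ℕ) : ℤ) * (K + (D + 1)) = (K : ℤ) * (K + (D + 1)) + (K + (D + 1)) := by push_cast; ring
      have a7 : (K : ℤ) * (K + D) + K = K * (K + (D + 1)) := by ring
      rw [a1] at h1
      rw [a3, a4, a5, a6, a7, ← h1, zpow_add₀ hq (_ * _)]
      ring
    rw [key, ih (D + 1), ← hr]
    have a1 : (A : ℤ) + (D + 1) = ((A + 1 : ℕ) : ℤ) + D := by push_cast; ring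
    rw [a1]
    ring

lemma shiftSum (j : ℕ) (s : ℤ) (A : ℕ) (hA : (A : ℤ) = j - s) (f : ℤ → ℂ)
    (h1 : ∀ K, K < 0 → f K = 0) (h2 : ∀ K, K + s < 0 → f K = 0) :
    ∑ k ∈ range (j + 1), f ((k : ℤ) - s) = ∑ K ∈ range (A + 1), f (K : ℤ) := by
  rcases le_total 0 s with hs | hs
  · obtain ⟨u, rfl⟩ := Int.eq_ofNat_of_zero_le hs
    have : j + 1 = u + (A + 1) := by omega
    rw [this, Finset.sum_range_add]
    rw [Finset.sum_eq_zero, zero_add]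
    · apply Finset.sum_congr rfl
      intro x _
      congr 1; push_cast; ring
    · intro x hx
      have := Finset.mem_range.1 hx
      apply h1; omega
  · obtain ⟨u, hu⟩ := Int.eq_ofNat_of_zero_le (by omega : 0 ≤ -s)
    have : A + 1 = u + (j + 1) := by omega
    rw [this, Finset.sum_range_add _ u, Finset.sum_eq_zero (s := range u), zero_add]
    · apply Finset.sum_congr rfl
      intro x _
      congr 1; push_cast; omega
    · intro x hx
      have := Finset.mem_range.1 hx
      apply h2; omega

lemma invB (q : ℂ) (hq : q ≠ 0) (hq1 : ‖q‖ < 1) (J : ℕ) (s b : ℤ) (hb : 0 ≤ b) :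
    ∑ k ∈ range (J + 1), (-1 : ℂ) ^ ((J : ℤ) - k) * q ^ (tri ((J : ℤ) - k - 1)) *
      iq q (J - k) * iq q (k - s) * iq q (k + s - b)
      = q ^ (((J : ℤ) - s) * (J + s - b)) * iq q (J - s) * iq q (J + s - b) := by
  by_cases h : (J : ℤ) < s
  · rw [iq_neg q (by omega : (J : ℤ) - s < 0), Finset.sum_eq_zero]
    · simp
    · intro k hk
      have := Finset.mem_range.1 hk
      rw [iq_neg q (by omega : (k : ℤ) - s < 0)]; simp
  · obtain ⟨A, hA⟩ := Int.eq_ofNat_of_zero_le (by omega : 0 ≤ (J : ℤ) - s)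
    have := invVan q hq hq1 A (2 * s - b)
    have e1 : (A : ℤ) + (2 * s - b) = J + s - b := by omega
    rw [e1] at this
    have hA' : (J : ℤ) - s = A := hA
    rw [hA', ← this]
    rw [← shiftSum J s A hA'.symm (fun K => (-1 : ℂ) ^ ((A : ℤ) - K) * q ^ (tri ((A : ℤ) - K - 1)) *
      iq q (A - K) * iq q K * iq q (K + (2 * s - b)))]
    · apply Finset.sum_congr rfl
      intro k _
      have a1 : (J : ℤ) - k = A - (k - s) := by omega
      have a2 : (k : ℤ) + s - b = k - s + (2 * s - b) := by ring
      simp only [a1, a2]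
    · intro K hK; simp only [iq_neg q hK]; simp
    · intro K hK
      by_cases h0 : K < 0
      · simp only [iq_neg q h0]; simp
      · simp only [iq_neg q (by omega : K + (2 * s - b) < 0)]; simp

lemma fwdB (q : ℂ) (hq : q ≠ 0) (hq1 : ‖q‖ < 1) (J : ℕ) (s : ℤ) :
    ∑ k ∈ range (J + 1), iq q (J - k) * q ^ ((k : ℤ) ^ 2) * (iq q (k - s) * iq q (k + s))
      = q ^ (s ^ 2) * (iq q (J - s) * iq q (J + s)) := by
  by_cases h : (J : ℤ) < s
  · rw [iq_neg q (by omega : (J : ℤ) - s < 0), Finset.sum_eq_zero]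
    · simp
    · intro k hk
      have := Finset.mem_range.1 hk
      rw [iq_neg q (by omega : (k : ℤ) - s < 0)]; simp
  · obtain ⟨A, hA⟩ := Int.eq_ofNat_of_zero_le (by omega : 0 ≤ (J : ℤ) - s)
    have := fwdVan q hq hq1 A (2 * s)
    have e1 : (A : ℤ) + (2 * s) = J + s := by omega
    rw [e1] at this
    have hA' : (J : ℤ) - s = A := hA
    rw [hA', ← this]
    rw [← shiftSum J s A hA'.symm (fun K => q ^ (K * (K + 2 * s)) *
      iq q (A - K) * iq q K * iq q (K + (2 * s)))]
    · rw [Finset.mul_sum]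
      apply Finset.sum_congr rfl
      intro k _
      have a1 : (J : ℤ) - k = A - (k - s) := by omega
      have a2 : (k : ℤ) + s = k - s + (2 * s) := by ring
      have a3 : (k : ℤ) ^ 2 = s ^ 2 + (k - s) * (k - s + 2 * s) := by ring
      rw [a3, zpow_add₀ hq, a1, a2]
      ring
    · intro K hK; simp only [iq_neg q hK]; simp
    · intro K hK
      by_cases h0 : K < 0
      · simp only [iq_neg q h0]; simp
      · simp only [iq_neg q (by omega : K + (2 * s) < 0)]; simp

noncomputable def SS (N : ℕ) (f : ℤ → ℂ) : ℂ := ∑ i ∈ range (2 * N + 2), f ((i : ℤ) - N)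

lemma SS_congr (N : ℕ) {f g : ℤ → ℂ} (h : ∀ s, f s = g s) : SS N f = SS N g := by
  have : f = g := funext h
  rw [this]

lemma SS_add (N : ℕ) (f g : ℤ → ℂ) : SS N (fun s => f s + g s) = SS N f + SS N g := by
  simp only [SS, Finset.sum_add_distrib]

lemma SS_mul (N : ℕ) (c : ℂ) (f : ℤ → ℂ) : SS N (fun s => c * f s) = c * SS N f := by
  simp only [SS, Finset.mul_sum]

lemma SS_refl (N : ℕ) (f : ℤ → ℂ) : SS N (fun s => f (1 - s)) = SS N f := by
  unfold SS
  rw [← Finset.sum_range_reflect (fun i : ℕ => f ((i : ℤ) - N))]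
  apply Finset.sum_congr rfl
  intro i hi
  have := Finset.mem_range.1 hi
  beta_reduce
  congr 1; omega

lemma SS_neg (N : ℕ) (f : ℤ → ℂ) (h1 : f (N + 1) = 0) (h2 : f (-N - 1) = 0) :
    SS N (fun s => f (-s)) = SS N f := by
  unfold SS
  rw [Finset.sum_range_succ, Finset.sum_range_succ _ (2 * N + 1)]
  have e1 : -(((2 * N + 1 : ℕ) : ℤ) - N) = -N - 1 := by push_cast; ring
  have e2 : (((2 * N + 1 : ℕ) : ℤ) - N) = N + 1 := by push_cast; ring
  beta_reduce
  rw [e1, e2, h1, h2, add_zero, add_zero]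
  rw [← Finset.sum_range_reflect (fun i : ℕ => f ((i : ℤ) - N))]
  apply Finset.sum_congr rfl
  intro i hi
  have := Finset.mem_range.1 hi
  beta_reduce
  congr 1; omega

lemma SS_tele (N : ℕ) (t : ℤ → ℂ) : SS N (fun s => t s - t (s - 1)) = t (N + 1) - t (-N - 1) := by
  unfold SS
  have := Finset.sum_range_sub (fun i : ℕ => t ((i : ℤ) - N - 1)) (2 * N + 2)
  have e1 : ((2 * N + 2 : ℕ) : ℤ) - N - 1 = N + 1 := by push_cast; ring
  have e2 : ((0 : ℕ) : ℤ) - N - 1 = -N - 1 := by push_cast; ring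
  simp only [e1, e2] at this
  rw [← this]
  apply Finset.sum_congr rfl
  intro i hi
  beta_reduce
  congr 2
  push_cast; ring

lemma SS_split (N : ℕ) (f : ℤ → ℂ) :
    SS N f = ∑ i ∈ range (N + 1), (f (-(i : ℤ)) + f (i + 1)) := by
  unfold SS
  rw [(by ring : 2 * N + 2 = (N + 1) + (N + 1)), Finset.sum_range_add, Finset.sum_add_distrib]
  congr 1
  · rw [← Finset.sum_range_reflect]
    apply Finset.sum_congr rfl
    intro i hi
    have := Finset.mem_range.1 hi
    congr 1; omega
  · apply Finset.sum_congr rfl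
    intro i hi
    congr 1; push_cast; ring

lemma SS_comm (N M : ℕ) (F : ℕ → ℤ → ℂ) :
    ∑ k ∈ range M, SS N (F k) = SS N (fun s => ∑ k ∈ range M, F k s) := by
  unfold SS
  rw [Finset.sum_comm]

noncomputable def Sg (q : ℂ) (e : ℤ → ℤ) (N : ℕ) (y : ℤ) : ℂ :=
  SS N (fun s => (-1 : ℂ) ^ s * q ^ (e s) * (iq q (y - s) * iq q (y + s)))

noncomputable def Nf (q : ℂ) (y : ℤ) : ℂ := (-1 : ℂ) ^ y * q ^ (tri y)

lemma m1_ne : (-1 : ℂ) ≠ 0 := by norm_num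

lemma m1_sq (y : ℤ) : (-1 : ℂ) ^ y * (-1 : ℂ) ^ y = 1 := by
  rw [← mul_zpow]; simp

lemma m1_sub (a b : ℤ) : (-1 : ℂ) ^ (a - b) = (-1 : ℂ) ^ a * (-1 : ℂ) ^ b := by
  rw [zpow_sub₀ m1_ne]
  have := m1_sq b
  rw [div_eq_iff (zpow_ne_zero _ m1_ne), mul_assoc, this, mul_one]

lemma stepA (q : ℂ) (hq : q ≠ 0) (hq1 : ‖q‖ < 1) (e : ℤ → ℤ) (N y : ℕ) :
    ∑ k ∈ range (y + 1), iq q ((y : ℤ) - k) * q ^ (-((k : ℤ) * y)) * (Nf q k * Sg q e N k)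
      = Nf q y * Sg q (fun s => e s - s ^ 2) N y := by
  unfold Sg
  simp only [← SS_mul]
  rw [SS_comm]
  apply SS_congr
  intro s
  have h := invB q hq hq1 y s 0 le_rfl
  simp only [sub_zero] at h
  have e1 : e s - s ^ 2 = e s + ((y : ℤ) - s) * (y + s) + (- (y : ℤ) ^ 2) := by ring
  have : ∀ k ∈ range (y + 1), iq q ((y : ℤ) - k) * q ^ (-((k : ℤ) * y)) * (Nf q k *
      ((-1 : ℂ) ^ s * q ^ (e s) * (iq q (k - s) * iq q (k + s)))) =
      (Nf q y * (-1 : ℂ) ^ s * q ^ (e s) * q ^ (- (y : ℤ) ^ 2)) * ((-1 : ℂ) ^ ((y : ℤ) - k) *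
        q ^ (tri ((y : ℤ) - k - 1)) * iq q (y - k) * iq q (k - s) * iq q (k + s)) := by
    intro k _
    have h1 : -((k : ℤ) * y) + tri k = tri y + (-(y : ℤ) ^ 2) + tri ((y : ℤ) - k - 1) := by
      have t1 := two_tri k
      have t2 := two_tri y
      have t3 := two_tri ((y : ℤ) - k - 1)
      apply half
      linear_combination t1 - t2 - t3
    have h2 : q ^ (-((k : ℤ) * y)) * q ^ tri k = q ^ tri y * q ^ (-(y : ℤ) ^ 2) * q ^ tri ((y : ℤ) - k - 1) := by
      rw [← zpow_add₀ hq, ← zpow_add₀ hq, ← zpow_add₀ hq, h1]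
    have h3 : (-1 : ℂ) ^ (y : ℤ) * (-1 : ℂ) ^ ((y : ℤ) - k) = (-1 : ℂ) ^ (k : ℤ) := by
      rw [m1_sub, ← mul_assoc, m1_sq, one_mul]
    unfold Nf
    rw [← h3]
    linear_combination (-1 : ℂ) ^ (y : ℤ) * (-1 : ℂ) ^ ((y : ℤ) - k) * iq q ((y : ℤ) - k) * (-1 : ℂ) ^ s * q ^ (e s) * (iq q (k - s) * iq q (k + s)) * h2
  rw [Finset.sum_congr rfl this, ← Finset.mul_sum, h, e1, zpow_add₀ hq, zpow_add₀ hq]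
  ring

lemma anti (q : ℂ) (hq : q ≠ 0) (hq1 : ‖q‖ < 1) (e : ℤ → ℤ) (he : ∀ s, e (1 - s) = e s) (N : ℕ) (y : ℤ) :
    Sg q e N y = -q ^ (y + 1) * SS N (fun s => (-1 : ℂ) ^ s * q ^ (e s - s) *
      (iq q (y + 1 - s) * iq q (y + s))) := by
  have h0 : SS N (fun s => (-1 : ℂ) ^ s * q ^ (e s) * (iq q (y + 1 - s) * iq q (y + s))) = 0 := by
    have h := SS_refl N (fun s => (-1 : ℂ) ^ s * q ^ (e s) * (iq q (y + 1 - s) * iq q (y + s)))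
    have h' : SS N (fun s => (-1 : ℂ) ^ (1 - s) * q ^ (e (1 - s)) * (iq q (y + 1 - (1 - s)) * iq q (y + (1 - s))))
      = SS N (fun s => (-1) * ((-1 : ℂ) ^ s * q ^ (e s) * (iq q (y + 1 - s) * iq q (y + s)))) := by
      apply SS_congr
      intro s
      rw [he, m1_sub, (by ring : y + 1 - (1 - s) = y + s), (by ring : y + (1 - s) = y + 1 - s)]
      simp only [zpow_one]
      ring
    rw [h', SS_mul] at h
    linear_combination (-1 / 2 : ℂ) * h
  have : Sg q e N y = SS N (fun s => (-1 : ℂ) ^ s * q ^ (e s) * (iq q (y + 1 - s) * iq q (y + s)) +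
      (-q ^ (y + 1)) * ((-1 : ℂ) ^ s * q ^ (e s - s) * (iq q (y + 1 - s) * iq q (y + s)))) := by
    apply SS_congr
    intro s
    have h1 := iq_rec q hq1 (y + 1 - s)
    rw [(by ring : y + 1 - s - 1 = y - s), zpow_sub₀ hq] at h1
    rw [← h1, zpow_sub₀ hq]
    have := zpow_ne_zero s hq
    field_simp
    ring
  rw [this, SS_add, SS_mul, h0, zero_add]

lemma stepB (q : ℂ) (hq : q ≠ 0) (hq1 : ‖q‖ < 1) (e : ℤ → ℤ) (he : ∀ s, e (1 - s) = e s) (N y : ℕ) :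
    ∑ k ∈ range (y + 1), iq q ((y : ℤ) - k) * q ^ (-((k : ℤ) * y) - k) * (Nf q k * Sg q e N k)
      = Nf q y * Sg q (fun s => e s - s ^ 2 + s) N y := by
  have he2 : ∀ s, (fun s => e s - s ^ 2 + s) (1 - s) = (fun s => e s - s ^ 2 + s) s := by
    intro s; simp only [he]; ring
  rw [anti q hq hq1 _ he2]
  simp only [anti q hq hq1 _ he, ← SS_mul]
  rw [SS_comm]
  apply SS_congr
  intro s
  have h := invB q hq hq1 (y + 1) s 1 (by norm_num)
  rw [Finset.sum_range_succ'] at h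
  have hz : iq q (((0 : ℕ) : ℤ) - s) * iq q (((0 : ℕ) : ℤ) + s - 1) = 0 := by
    rcases le_or_gt s 0 with h | h
    · rw [iq_neg q (by push_cast; omega : ((0 : ℕ) : ℤ) + s - 1 < 0)]; simp
    · rw [iq_neg q (by push_cast; omega : ((0 : ℕ) : ℤ) - s < 0)]; simp
  rw [mul_assoc _ (iq q _) (iq q _), hz, mul_zero, add_zero] at h
  push_cast at h
  have b1 : (y : ℤ) + 1 + s - 1 = y + s := by ring
  rw [b1] at h
  have e1 : e s - s ^ 2 + s - s = (e s - s) + ((y : ℤ) + 1 - s) * (y + s) + (- (y : ℤ) ^ 2 - y) := by ring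
  have : ∀ k ∈ range (y + 1), iq q ((y : ℤ) - k) * q ^ (-((k : ℤ) * y) - k) * (Nf q k *
      (-q ^ ((k : ℤ) + 1) * ((-1 : ℂ) ^ s * q ^ (e s - s) * (iq q (k + 1 - s) * iq q (k + s))))) =
      (Nf q y * (-q ^ ((y : ℤ) + 1)) * (-1 : ℂ) ^ s * q ^ (e s - s) * q ^ (- (y : ℤ) ^ 2 - y)) * ((-1 : ℂ) ^ ((y : ℤ) + 1 - (k + 1)) *
        q ^ (tri ((y : ℤ) + 1 - (k + 1) - 1)) * iq q ((y : ℤ) + 1 - (k + 1)) * iq q ((k : ℤ) + 1 - s) * iq q ((k : ℤ) + 1 + s - 1)) := by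
    intro k _
    rw [(by ring : (y : ℤ) + 1 - (k + 1) = y - k), (by ring : (k : ℤ) + 1 + s - 1 = k + s)]
    have h1 : (-((k : ℤ) * y) - k) + tri k + (k + 1) = tri y + (y + 1) + (-(y : ℤ) ^ 2 - y) + tri ((y : ℤ) - k - 1) := by
      have t1 := two_tri k
      have t2 := two_tri y
      have t3 := two_tri ((y : ℤ) - k - 1)
      apply half
      linear_combination t1 - t2 - t3
    have h2 : q ^ (-((k : ℤ) * y) - k) * q ^ tri k * q ^ ((k : ℤ) + 1) = q ^ tri y * q ^ ((y : ℤ) + 1) * q ^ (-(y : ℤ) ^ 2 - y) * q ^ tri ((y : ℤ) - k - 1) := by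
      rw [← zpow_add₀ hq, ← zpow_add₀ hq, ← zpow_add₀ hq, ← zpow_add₀ hq, ← zpow_add₀ hq, h1]
    have h3 : (-1 : ℂ) ^ (y : ℤ) * (-1 : ℂ) ^ ((y : ℤ) - k) = (-1 : ℂ) ^ (k : ℤ) := by
      rw [m1_sub, ← mul_assoc, m1_sq, one_mul]
    unfold Nf
    rw [← h3]
    linear_combination (-1) * (-1 : ℂ) ^ (y : ℤ) * (-1 : ℂ) ^ ((y : ℤ) - k) * iq q ((y : ℤ) - k) * (-1 : ℂ) ^ s * q ^ (e s - s) * (iq q (k + 1 - s) * iq q (k + s)) * h2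
  rw [Finset.sum_congr rfl this, ← Finset.mul_sum, h, e1, zpow_add₀ hq (_ + _), zpow_add₀ hq (e s - s)]
  ring

lemma delta (q : ℂ) (hq : q ≠ 0) (hq1 : ‖q‖ < 1) (N y : ℕ) (hy : y ≤ N) :
    Sg q tri N y = if y = 0 then 1 else 0 := by
  split_ifs with h
  · subst h
    unfold Sg
    rw [SS_split, Finset.sum_eq_single 0]
    · simp [iq_zero, tri, iq_neg]
    · intro b _ hb
      rw [iq_neg q (by push_cast; omega : ((0 : ℕ) : ℤ) + -(b : ℤ) < 0),
        iq_neg q (by push_cast; omega : ((0 : ℕ) : ℤ) - ((b : ℤ) + 1) < 0)]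
      simp
    · simp
  · obtain ⟨z, rfl⟩ := Nat.exists_eq_succ_of_ne_zero h
    have hne := one_sub_ne q hq1 z
    set y : ℕ := z + 1 with hydef
    have ht := SS_tele N (fun s => (-1 : ℂ) ^ s * q ^ tri s * (iq q ((y : ℤ) - s - 1) * iq q (y + s)))
    rw [iq_neg q (by omega : (y : ℤ) - (N + 1) - 1 < 0), iq_neg q (by omega : (y : ℤ) + (-N - 1) < 0)] at ht
    simp only [zero_mul, mul_zero, sub_zero] at ht
    have h2 : SS N (fun s => (-1 : ℂ) ^ s * q ^ tri s * (iq q ((y : ℤ) - s - 1) * iq q (y + s)) -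
        (-1 : ℂ) ^ (s - 1) * q ^ tri (s - 1) * (iq q ((y : ℤ) - (s - 1) - 1) * iq q (y + (s - 1)))) =
        (1 - q ^ y) * (SS N (fun s => (-1 : ℂ) ^ s * q ^ tri s * (iq q (y - s) * iq q (y + s))) +
          SS N (fun s => (-1 : ℂ) ^ s * q ^ tri (s - 1) * (iq q (y - s) * iq q (y + s)))) := by
      rw [← SS_add, ← SS_mul]
      apply SS_congr
      intro s
      have i1 := iq_rec q hq1 ((y : ℤ) - s)
      have i2 := iq_rec q hq1 ((y : ℤ) + s)
      rw [(by ring : (y : ℤ) - (s - 1) - 1 = y - s), (by ring : (y : ℤ) + (s - 1) = y + s - 1), ← i1, ← i2,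
        m1_sub, zpow_one]
      have t : tri s = tri (s - 1) + s := by
        have t1 := two_tri s
        have t2 := two_tri (s - 1)
        apply half; linear_combination t1 - t2
      have hs := zpow_ne_zero s hq
      rw [t, zpow_add₀ hq, zpow_sub₀ hq, zpow_add₀ hq, zpow_natCast]
      field_simp
      ring
    have h3 : SS N (fun s => (-1 : ℂ) ^ s * q ^ tri (s - 1) * (iq q (y - s) * iq q (y + s))) =
      SS N (fun s => (-1 : ℂ) ^ s * q ^ tri s * (iq q (y - s) * iq q (y + s))) := by
      rw [← SS_neg N (fun s => (-1 : ℂ) ^ s * q ^ tri s * (iq q (y - s) * iq q (y + s)))]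
      · apply SS_congr
        intro s
        have t : tri (-s) = tri (s - 1) := by
          have t1 := two_tri (-s)
          have t2 := two_tri (s - 1)
          apply half; linear_combination t1 - t2
        have n1 : (-1 : ℂ) ^ (-s) = (-1 : ℂ) ^ s := by
          have := m1_sub 0 s
          simpa using this
        rw [t, n1, sub_neg_eq_add, ← sub_eq_add_neg]
        ring
      · rw [iq_neg q (by omega : (y : ℤ) - (N + 1) < 0)]; simp
      · rw [iq_neg q (by omega : (y : ℤ) + (-N - 1) < 0)]; simp
    rw [h2, h3] at ht
    have := (mul_eq_zero.1 ht).resolve_left hne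
    unfold Sg
    rw [hydef] at this
    linear_combination (1 / 2 : ℂ) * this

noncomputable def Wf (q : ℂ) (p : ℕ) : ℕ → ℕ → ℂ
  | 0, y => iq q y
  | i + 1, y => ∑ x ∈ range (y + 1), iq q ((y : ℤ) - x) * q ^ (-((x : ℤ) * y) - (if i < p then (x : ℤ) else 0)) * Wf q p i x

lemma Wf_closed (q : ℂ) (hq : q ≠ 0) (hq1 : ‖q‖ < 1) (p N : ℕ) (i : ℕ) : ∀ y ≤ N,
    Wf q p i y = Nf q y * Sg q (fun s => -((i : ℤ) + 1) * s ^ 2 + tri s + ((min i p : ℕ) : ℤ) * s) N y := by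
  induction i with
  | zero =>
    intro y hy
    have h := stepA q hq hq1 tri N y
    have e : (fun s : ℤ => -(((0 : ℕ) : ℤ) + 1) * s ^ 2 + tri s + ((min 0 p : ℕ) : ℤ) * s) = fun s => tri s - s ^ 2 := by
      funext s; simp; ring
    rw [e, ← h, Finset.sum_eq_single 0]
    · rw [delta q hq hq1 N 0 (by omega)]
      simp [Wf, Nf, tri]
    · intro b hb hb0
      have := Finset.mem_range.1 hb
      rw [delta q hq hq1 N b (by omega)]
      simp [hb0]
    · simp
  | succ i ih =>
    intro y hy
    rw [Wf]
    have : ∀ x ∈ range (y + 1), iq q ((y : ℤ) - x) * q ^ (-((x : ℤ) * y) - (if i < p then (x : ℤ) else 0)) * Wf q p i x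
      = iq q ((y : ℤ) - x) * q ^ (-((x : ℤ) * y) - (if i < p then (x : ℤ) else 0)) * (Nf q x * Sg q (fun s => -((i : ℤ) + 1) * s ^ 2 + tri s + ((min i p : ℕ) : ℤ) * s) N x) := by
      intro x hx
      have := Finset.mem_range.1 hx
      rw [ih x (by omega)]
    rw [Finset.sum_congr rfl this]
    by_cases hp : i < p
    · simp only [if_pos hp]
      rw [min_eq_left hp.le, min_eq_left (by omega : i + 1 ≤ p)]
      rw [stepB q hq hq1]
      · congr 2
        funext s
        push_cast; ring
      · intro s
        have t1 := two_tri s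
        have t2 := two_tri (1 - s)
        apply half
        linear_combination t2 - t1
    · simp only [if_neg hp, sub_zero]
      rw [min_eq_right (by omega : p ≤ i), min_eq_right (by omega : p ≤ i + 1)]
      rw [stepA q hq hq1]
      congr 2
      funext s
      push_cast; ring

noncomputable def Fe (t m : ℕ) (s : ℤ) : ℤ := -(2 * (t : ℤ) + 1) * tri (s - 1) - ((m : ℤ) + 1) * s

noncomputable def V0 (q : ℂ) (t m n : ℕ) (x : ℤ) : ℂ :=
  SS n (fun s => (-1 : ℂ) ^ s * q ^ (Fe t m s) * (iq q (x - s) * iq q (x + s - 1)))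

lemma midl (q : ℂ) (hq : q ≠ 0) (hq1 : ‖q‖ < 1) (t m n x : ℕ) (hmt : m ≤ t) (hx : x ≤ n) :
    (-1 : ℂ) ^ (x : ℤ) * q ^ (tri ((x : ℤ) - 1)) * (Wf q (t - m - 1) t x - q ^ (x : ℤ) * Wf q (t - m) t x)
      = q ^ ((x : ℤ) ^ 2) * V0 q t m n x := by
  rw [Wf_closed q hq hq1 _ n t x hx, Wf_closed q hq hq1 _ n t x hx,
    min_eq_right (by omega : t - m - 1 ≤ t), min_eq_right (by omega : t - m ≤ t)]
  have h1 : Sg q (fun s => -((t : ℤ) + 1) * s ^ 2 + tri s + ((t - m - 1 : ℕ) : ℤ) * s) n x =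
      Sg q (Fe t m) n x := by
    rcases Nat.lt_or_ge m t with h | h
    · congr 1
      funext s
      have t1 := two_tri s
      have t2 := two_tri (s - 1)
      have e : ((t - m - 1 : ℕ) : ℤ) = t - m - 1 := by omega
      rw [e]
      unfold Fe
      apply half
      linear_combination t1 + (2 * (t : ℤ) + 1) * t2
    · have : m = t := le_antisymm hmt h
      subst this
      unfold Sg
      rw [← SS_neg]
      · apply SS_congr
        intro s
        have n1 : (-1 : ℂ) ^ (-s) = (-1 : ℂ) ^ s := by
          have := m1_sub 0 s
          simpa using this
        have e : ((m - m - 1 : ℕ) : ℤ) = 0 := by omega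
        have e2 : -((m : ℤ) + 1) * (-s) ^ 2 + tri (-s) + 0 * (-s) = Fe m m s := by
          have t1 := two_tri (-s)
          have t2 := two_tri (s - 1)
          unfold Fe
          apply half
          linear_combination t1 + (2 * (m : ℤ) + 1) * t2
        beta_reduce
        rw [e, e2, n1, sub_neg_eq_add, ← sub_eq_add_neg]
        ring
      · rw [iq_neg q (by omega : (x : ℤ) - (n + 1) < 0)]; simp
      · rw [iq_neg q (by omega : (x : ℤ) + (-n - 1) < 0)]; simp
  have h2 : Sg q (fun s => -((t : ℤ) + 1) * s ^ 2 + tri s + ((t - m : ℕ) : ℤ) * s) n x =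
      Sg q (fun s => Fe t m s + s) n x := by
    congr 1
    funext s
    have t1 := two_tri s
    have t2 := two_tri (s - 1)
    have e : ((t - m : ℕ) : ℤ) = t - m := by omega
    rw [e]
    unfold Fe
    apply half
    linear_combination t1 + (2 * (t : ℤ) + 1) * t2
  have h3 : V0 q t m n x = Sg q (Fe t m) n x + (-q ^ (x : ℤ)) * Sg q (fun s => Fe t m s + s) n x := by
    unfold V0 Sg
    rw [← SS_mul, ← SS_add]
    apply SS_congr
    intro s
    rw [← iq_rec q hq1, zpow_add₀ hq, zpow_add₀ hq]
    ring
  rw [h1, h2, h3]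
  have e3 : (x : ℤ) ^ 2 = tri ((x : ℤ) - 1) + tri x := by
    have t1 := two_tri x
    have t2 := two_tri ((x : ℤ) - 1)
    apply half
    linear_combination - t1 - t2
  rw [e3, zpow_add₀ hq]
  unfold Nf
  have := m1_sq (x : ℤ)
  linear_combination (q ^ (tri ((x : ℤ) - 1)) * q ^ tri x * (Sg q (Fe t m) n x + (-q ^ (x : ℤ)) * Sg q (fun s => Fe t m s + s) n x)) * this

noncomputable def cc (q : ℂ) (t m : ℕ) (k : ℤ) : ℂ :=
  (-1 : ℂ) ^ k * q ^ (-(2 * (t : ℤ) + 3) * k * (k + 1) / 2 + ((m : ℤ) + 1) * k)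

noncomputable def CC (q : ℂ) (t m : ℕ) (l : ℕ) : ℂ :=
  ∑ k ∈ Finset.Icc (-(l : ℤ)) ((l : ℤ) - 1), cc q t m k

lemma cc_eq (q : ℂ) (t m : ℕ) (k : ℤ) : cc q t m k =
  (-1 : ℂ) ^ k * q ^ (-(2 * (t : ℤ) + 3) * tri k + ((m : ℤ) + 1) * k) := by
  unfold cc
  have : -(2 * (t : ℤ) + 3) * k * (k + 1) / 2 = -(2 * (t : ℤ) + 3) * tri k := by
    apply Int.ediv_eq_of_eq_mul_right (by norm_num)
    linear_combination (2 * (t : ℤ) + 3) * two_tri k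
  rw [this]

lemma CC_zero (q : ℂ) (t m : ℕ) : CC q t m 0 = 0 := by simp [CC]

lemma CC_succ (q : ℂ) (t m l : ℕ) :
    CC q t m (l + 1) = CC q t m l + (cc q t m l + cc q t m (-(l : ℤ) - 1)) := by
  unfold CC
  have : Finset.Icc (-((l + 1 : ℕ) : ℤ)) (((l + 1 : ℕ) : ℤ) - 1) =
      insert (l : ℤ) (insert (-(l : ℤ) - 1) (Finset.Icc (-(l : ℤ)) ((l : ℤ) - 1))) := by
    ext z
    simp only [Finset.mem_Icc, Finset.mem_insert]
    push_cast
    omega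
  rw [this, Finset.sum_insert, Finset.sum_insert]
  · ring
  · simp
  · simp only [Finset.mem_Icc, Finset.mem_insert]
    omega

lemma abelS (h C : ℕ → ℂ) (C0 : C 0 = 0) (n : ℕ) :
    ∑ l ∈ range n, (h l - h (l + 1)) * C l + h n * C n = ∑ l ∈ range n, h (l + 1) * (C (l + 1) - C l) := by
  induction n with
  | zero => simp [C0]
  | succ n ih =>
    rw [Finset.sum_range_succ, Finset.sum_range_succ, ← ih]; ring

noncomputable def aa (q : ℂ) (t m : ℕ) (l : ℕ) : ℂ :=
  q ^ ((l : ℤ) ^ 2 - l) * (1 - q ^ (2 * (l : ℤ))) * CC q t m l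

noncomputable def VV (q : ℂ) (t m n i : ℕ) (y : ℤ) : ℂ :=
  ∑ l ∈ range (n + 1), aa q t m l * q ^ ((i : ℤ) * (l : ℤ) ^ 2) * (iq q (y - l) * iq q (y + l))

lemma V0_eq (q : ℂ) (hq : q ≠ 0) (hq1 : ‖q‖ < 1) (t m n x : ℕ) (hx : x ≤ n) :
    V0 q t m n x = VV q t m n 0 x := by
  unfold V0 VV
  have h := abelS (fun l => q ^ ((l : ℤ) ^ 2 - l) * (iq q (x - l) * iq q (x + l - 1))) (CC q t m)
    (CC_zero q t m) (n + 1)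
  beta_reduce at h
  rw [iq_neg q (by push_cast; omega : (x : ℤ) - ((n + 1 : ℕ) : ℤ) < 0), zero_mul, mul_zero, zero_mul, add_zero] at h
  rw [SS_split]
  trans
  swap
  · symm
    refine Eq.trans ?_ h
    apply Finset.sum_congr rfl
    intro l _
    have i1 := iq_rec q hq1 ((x : ℤ) - l)
    have i2 := iq_rec q hq1 ((x : ℤ) + l)
    have a1 : (x : ℤ) - ((l + 1 : ℕ) : ℤ) = x - l - 1 := by push_cast; ring
    have a2 : (x : ℤ) + ((l + 1 : ℕ) : ℤ) - 1 = x + l := by push_cast; ring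
    have a3 : ((l + 1 : ℕ) : ℤ) ^ 2 - ((l + 1 : ℕ) : ℤ) = (l : ℤ) ^ 2 - l + 2 * l := by push_cast; ring
    have a4 : (x : ℤ) + l = (x - l) + 2 * l := by ring
    have a5 : q ^ ((x : ℤ) + l) = q ^ ((x : ℤ) - l) * q ^ (2 * (l : ℤ)) := by rw [← zpow_add₀ hq, ← a4]
    rw [a1, a2, a3, ← i1, ← i2, a5, zpow_add₀ hq ((l : ℤ) ^ 2 - l)]
    unfold aa
    simp only [Nat.cast_zero, zero_mul, zpow_zero]
    ring
  · apply Finset.sum_congr rfl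
    intro l _
    rw [CC_succ, add_sub_cancel_left, cc_eq, cc_eq]
    have a1 : (x : ℤ) - ((l + 1 : ℕ) : ℤ) = x - (l + 1) := by push_cast; ring
    have a2 : (x : ℤ) + ((l + 1 : ℕ) : ℤ) - 1 = x + l := by push_cast; ring
    have t0 := two_tri l
    have a3 : ((l + 1 : ℕ) : ℤ) ^ 2 - ((l + 1 : ℕ) : ℤ) = 2 * tri l := by push_cast; linear_combination - t0
    have a4 : tri (-(l : ℤ) - 1) = tri l := by
      have t1 := two_tri (-(l : ℤ) - 1)
      apply half; linear_combination t1 - t0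
    have n1 : (-1 : ℂ) ^ (-(l : ℤ)) = (-1 : ℂ) ^ (l : ℤ) := by
      have := m1_sub 0 l
      simpa using this
    have n2 : (-1 : ℂ) ^ ((l : ℤ) + 1) = (-1 : ℂ) ^ (-(l : ℤ) - 1) := by
      rw [m1_sub, n1, zpow_add₀ m1_ne]
    rw [a1, a2, a3, a4, n1, n2]
    unfold Fe
    rw [a4, (by ring : (l : ℤ) + 1 - 1 = l), (by ring : (x : ℤ) - -(l : ℤ) = x + l), (by ring : (x : ℤ) + ((l : ℤ) + 1) - 1 = x + l),
      (by ring : (x : ℤ) + -(l : ℤ) - 1 = x - (l + 1))]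
    have b1 : q ^ (-(2 * (t : ℤ) + 1) * tri l - ((m : ℤ) + 1) * -(l : ℤ)) = q ^ (2 * tri l) * q ^ (-(2 * (t : ℤ) + 3) * tri l + ((m : ℤ) + 1) * l) := by
      rw [← zpow_add₀ hq]; congr 1; ring
    have b2 : q ^ (-(2 * (t : ℤ) + 1) * tri l - ((m : ℤ) + 1) * ((l : ℤ) + 1)) = q ^ (2 * tri l) * q ^ (-(2 * (t : ℤ) + 3) * tri l + ((m : ℤ) + 1) * (-(l : ℤ) - 1)) := by
      rw [← zpow_add₀ hq]; congr 1; ring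
    rw [b1, b2]
    ring

lemma VV_step (q : ℂ) (hq : q ≠ 0) (hq1 : ‖q‖ < 1) (t m n i y : ℕ) :
    ∑ k ∈ range (y + 1), iq q ((y : ℤ) - k) * q ^ ((k : ℤ) ^ 2) * VV q t m n i k = VV q t m n (i + 1) y := by
  unfold VV
  simp only [Finset.mul_sum]
  rw [Finset.sum_comm]
  apply Finset.sum_congr rfl
  intro l _
  have h := fwdB q hq hq1 y l
  have e : q ^ (((i + 1 : ℕ) : ℤ) * (l : ℤ) ^ 2) = q ^ ((i : ℤ) * (l : ℤ) ^ 2) * q ^ ((l : ℤ) ^ 2) := by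
    rw [← zpow_add₀ hq]; congr 1; push_cast; ring
  rw [e]
  have : ∀ k ∈ range (y + 1), iq q ((y : ℤ) - k) * q ^ ((k : ℤ) ^ 2) * (aa q t m l * q ^ ((i : ℤ) * (l : ℤ) ^ 2) * (iq q (k - l) * iq q (k + l)))
    = (aa q t m l * q ^ ((i : ℤ) * (l : ℤ) ^ 2)) * (iq q ((y : ℤ) - k) * q ^ ((k : ℤ) ^ 2) * (iq q (k - l) * iq q (k + l))) := by
    intro k _; ring
  rw [Finset.sum_congr rfl this, ← Finset.mul_sum, h]
  ring

noncomputable def ww (q : ℂ) (t p : ℕ) (c : ℤ) (i x y : ℕ) : ℂ :=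
  if i < t then q ^ (-((x : ℤ) * y) - (if i < p then (x : ℤ) else 0))
  else if i = t then (-1 : ℂ) ^ (x : ℤ) * q ^ (tri ((x : ℤ) - 1)) * q ^ (c * x)
  else q ^ ((x : ℤ) ^ 2)

noncomputable def ed (q : ℂ) (t p : ℕ) (c : ℤ) (i x y : ℕ) : ℂ := iq q ((y : ℤ) - x) * ww q t p c i x y

noncomputable def ZZ (v : ℕ → ℂ) (e : ℕ → ℕ → ℕ → ℂ) (N : ℕ) : ℕ → ℕ → ℂ
  | 0, y => v y
  | i + 1, y => ∑ x ∈ range (N + 1), e i x y * ZZ v e N i x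

lemma chain (v : ℕ → ℂ) (e : ℕ → ℕ → ℕ → ℂ) (N L : ℕ) : ∀ u : ℕ → ℂ,
    ∑ a : Fin (L + 1) → Fin (N + 1), v (a 0) * (∏ i : Fin L, e i (a i.castSucc) (a i.succ)) * u (a (Fin.last L))
      = ∑ y ∈ range (N + 1), u y * ZZ v e N L y := by
  induction L with
  | zero =>
    intro u
    rw [← (Equiv.funUnique (Fin 1) (Fin (N + 1))).symm.sum_comp, Finset.sum_range]
    apply Finset.sum_congr rfl
    intro y _
    simp [ZZ, mul_comm]
  | succ L ih =>
    intro u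
    rw [← (Fin.snocEquiv (fun _ : Fin (L + 2) => Fin (N + 1))).sum_comp, Fintype.sum_prod_type]
    rw [Finset.sum_range]
    apply Finset.sum_congr rfl
    intro y _
    rw [ZZ, ← ih (fun x => e L x y), Finset.mul_sum]
    apply Finset.sum_congr rfl
    intro b _
    rw [Fin.prod_univ_castSucc]
    have h0 : (Fin.snoc b y : Fin (L + 2) → Fin (N + 1)) 0 = b 0 := by
      exact Fin.snoc_castSucc (α := fun _ => Fin (N + 1)) y b 0
    have h1 : ∀ i : Fin (L + 1), (Fin.snoc b y : Fin (L + 2) → Fin (N + 1)) i.castSucc = b i := by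
      intro i
      exact Fin.snoc_castSucc (α := fun _ => Fin (N + 1)) y b i
    have h2 : (Fin.snoc b y : Fin (L + 2) → Fin (N + 1)) (Fin.last (L + 1)) = y :=
      Fin.snoc_last (α := fun _ => Fin (N + 1)) y b
    simp only [Fin.snocEquiv, Equiv.coe_fn_mk]
    simp only [← Fin.castSucc_succ, Fin.succ_castSucc, Fin.succ_last, h0, h1, h2, Fin.val_castSucc, Fin.val_last]
    ring

lemma ZZ_low (q : ℂ) (t p n : ℕ) (c : ℤ) (i : ℕ) (hi : i ≤ t) : ∀ y ≤ n,
    ZZ (fun x => iq q x) (ed q t p c) n i y = Wf q p i y := by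
  induction i with
  | zero => intro y _; rfl
  | succ i ih =>
    intro y hy
    rw [ZZ, Wf]
    symm
    have hsub : range (y + 1) ⊆ range (n + 1) := Finset.range_subset_range.2 (by omega)
    rw [← Finset.sum_subset hsub]
    · apply Finset.sum_congr rfl
      intro x hx
      have := Finset.mem_range.1 hx
      rw [ih (by omega) x (by omega), ed, ww, if_pos (by omega : i < t)]
    · intro x _ hx
      have : y + 1 ≤ x := by simpa using hx
      rw [ed, iq_neg q (by omega : (y : ℤ) - x < 0)]
      simp

lemma ZZ_high (q : ℂ) (hq : q ≠ 0) (hq1 : ‖q‖ < 1) (t m n : ℕ) (hmt : m ≤ t) (i : ℕ) : ∀ y ≤ n,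
    ZZ (fun x => iq q x) (ed q t (t - m - 1) 0) n (t + 1 + i) y -
      ZZ (fun x => iq q x) (ed q t (t - m) 1) n (t + 1 + i) y = VV q t m n (i + 1) y := by
  induction i with
  | zero =>
    intro y hy
    rw [← VV_step q hq hq1, add_zero, ZZ, ZZ, ← Finset.sum_sub_distrib]
    have hsub : range (y + 1) ⊆ range (n + 1) := Finset.range_subset_range.2 (by omega)
    rw [← Finset.sum_subset hsub]
    · apply Finset.sum_congr rfl
      intro x hx
      have := Finset.mem_range.1 hx
      rw [ZZ_low q t _ n _ t le_rfl x (by omega), ZZ_low q t _ n _ t le_rfl x (by omega), ed, ed, ww, ww]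
      simp only [lt_irrefl, if_false, if_true, zero_mul, one_mul, zpow_zero]
      rw [← V0_eq q hq hq1 t m n x (by omega)]
      have := midl q hq hq1 t m n x hmt (by omega)
      linear_combination iq q ((y : ℤ) - x) * this
    · intro x _ hx
      have : y + 1 ≤ x := by simpa using hx
      rw [ed, ed, iq_neg q (by omega : (y : ℤ) - x < 0)]
      simp
  | succ i ih =>
    intro y hy
    rw [← VV_step q hq hq1, ← add_assoc, ZZ, ZZ, ← Finset.sum_sub_distrib]
    have hsub : range (y + 1) ⊆ range (n + 1) := Finset.range_subset_range.2 (by omega)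
    rw [← Finset.sum_subset hsub]
    · apply Finset.sum_congr rfl
      intro x hx
      have := Finset.mem_range.1 hx
      rw [← ih x (by omega), ed, ed, ww, ww]
      rw [if_neg (by omega), if_neg (by omega), if_neg (by omega), if_neg (by omega)]
      ring
    · intro x _ hx
      have : y + 1 ≤ x := by simpa using hx
      rw [ed, ed, iq_neg q (by omega : (y : ℤ) - x < 0)]
      simp

lemma prod_zpow_sum (q : ℂ) (hq : q ≠ 0) (f : ℕ → ℤ) (n : ℕ) :
    ∏ i ∈ range n, q ^ (f i) = q ^ (∑ i ∈ range n, f i) := by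
  induction n with
  | zero => simp
  | succ n ih => rw [Finset.prod_range_succ, Finset.sum_range_succ, ih, zpow_add₀ hq]

lemma sum_ite_lt (f : ℕ → ℤ) (p t : ℕ) (h : p ≤ t) :
    ∑ i ∈ range t, (if i < p then f i else 0) = ∑ i ∈ range p, f i := by
  obtain ⟨r, rfl⟩ := Nat.exists_eq_add_of_le h
  rw [Finset.sum_range_add, Finset.sum_eq_zero (s := range r), add_zero]
  · apply Finset.sum_congr rfl
    intro i hi
    rw [if_pos (Finset.mem_range.1 hi)]
  · intro i _
    rw [if_neg (by omega)]

lemma wprod (q : ℂ) (hq : q ≠ 0) (t p n : ℕ) (hp : p ≤ t) (c : ℤ) (A : ℕ → ℕ) :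
    (∏ i ∈ range (2 * t), ww q t p c i (A i) (A (i + 1))) * ww q t p c (2 * t) (A (2 * t)) n =
      (-1 : ℂ) ^ (A t) * q ^ ((∑ i ∈ Finset.range t, (A (t + 1 + i) : ℤ) ^ 2)
      + (A t : ℤ) * ((A t : ℤ) - 1) / 2
      - (∑ i ∈ Finset.range t, (A i : ℤ) * (A (i + 1) : ℤ))
      - (∑ i ∈ Finset.range p, (A i : ℤ)) + c * A t) := by
  have h1 : ww q t p c (2 * t) (A (2 * t)) n = ww q t p c (2 * t) (A (2 * t)) (A (2 * t + 1)) := by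
    have hn : ¬ (2 * t < t) := by omega
    simp only [ww, if_neg hn]
  rw [h1, ← Finset.prod_range_succ (fun i => ww q t p c i (A i) (A (i + 1))),
    (by ring : 2 * t + 1 = t + 1 + t), Finset.prod_range_add, Finset.prod_range_succ]
  have h2 : ∏ i ∈ range t, ww q t p c i (A i) (A (i + 1)) =
      q ^ (- (∑ i ∈ Finset.range t, (A i : ℤ) * (A (i + 1) : ℤ)) - (∑ i ∈ Finset.range p, (A i : ℤ))) := by
    rw [← sum_ite_lt (fun i => (A i : ℤ)) p t hp, ← Finset.sum_neg_distrib, ← Finset.sum_sub_distrib,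
      ← prod_zpow_sum q hq]
    apply Finset.prod_congr rfl
    intro i hi
    rw [ww, if_pos (Finset.mem_range.1 hi)]
  have h3 : ∏ i ∈ range t, ww q t p c (t + 1 + i) (A (t + 1 + i)) (A (t + 1 + i + 1)) =
      q ^ (∑ i ∈ Finset.range t, (A (t + 1 + i) : ℤ) ^ 2) := by
    rw [← prod_zpow_sum q hq]
    apply Finset.prod_congr rfl
    intro i hi
    rw [ww, if_neg (by omega), if_neg (by omega)]
  have h4 : ww q t p c t (A t) (A (t + 1)) = (-1 : ℂ) ^ (A t) * (q ^ ((A t : ℤ) * ((A t : ℤ) - 1) / 2) * q ^ (c * A t)) := by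
    rw [ww, if_neg (by omega), if_pos rfl, tri, zpow_natCast, sub_add_cancel, mul_comm ((A t : ℤ) - 1)]
    ring
  rw [h2, h3, h4]
  have : ∀ x a b c d : ℂ, a * (x * (b * c)) * d = x * (a * (b * c) * d) := by intros; ring
  rw [this, ← zpow_add₀ hq, ← zpow_add₀ hq, ← zpow_add₀ hq]
  congr 2
  ring

lemma term_eq (q : ℂ) (hq : q ≠ 0) (t m n : ℕ) (hmt : m ≤ t) (A : ℕ → ℕ)
    (hAle : ∀ j, A j ≤ n) (hAm : ∀ j < 2 * t, A j ≤ A (j + 1)) :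
    CTermM q t m n A =
      iq q (A 0) * (∏ i ∈ range (2 * t), ed q t (t - m - 1) 0 i (A i) (A (i + 1))) * ed q t (t - m - 1) 0 (2 * t) (A (2 * t)) n -
      iq q (A 0) * (∏ i ∈ range (2 * t), ed q t (t - m) 1 i (A i) (A (i + 1))) * ed q t (t - m) 1 (2 * t) (A (2 * t)) n := by
  have hd : ∀ (p : ℕ) (c : ℤ), p ≤ t →
      iq q (A 0) * (∏ i ∈ range (2 * t), ed q t p c i (A i) (A (i + 1))) * ed q t p c (2 * t) (A (2 * t)) n =
      (qPoch q q (n - A (2 * t)) * (∏ i ∈ Finset.range (2 * t), qPoch q q (A (i + 1) - A i)) *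
    qPoch q q (A 0))⁻¹ * ((-1 : ℂ) ^ (A t) * q ^ ((∑ i ∈ Finset.range t, (A (t + 1 + i) : ℤ) ^ 2)
      + (A t : ℤ) * ((A t : ℤ) - 1) / 2
      - (∑ i ∈ Finset.range t, (A i : ℤ) * (A (i + 1) : ℤ))
      - (∑ i ∈ Finset.range p, (A i : ℤ)) + c * A t)) := by
    intro p c hp
    rw [← wprod q hq t p n hp c A]
    unfold ed
    rw [Finset.prod_mul_distrib]
    have h1 : ∏ i ∈ range (2 * t), iq q ((A (i + 1) : ℤ) - A i) = (∏ i ∈ Finset.range (2 * t), qPoch q q (A (i + 1) - A i))⁻¹ := by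
      rw [← Finset.prod_inv_distrib]
      apply Finset.prod_congr rfl
      intro i hi
      rw [← iq_nat, Nat.cast_sub (hAm i (Finset.mem_range.1 hi))]
    rw [h1, iq_nat, ← Nat.cast_sub (hAle (2 * t)), iq_nat, mul_inv, mul_inv]
    ring
  rw [hd _ _ (by omega), hd _ _ (by omega)]
  unfold CTermM
  have hS : (∑ i ∈ Finset.range (t - m), (A i : ℤ)) = (∑ i ∈ Finset.range (t - m - 1), (A i : ℤ)) + (if m < t then (A (t - m - 1) : ℤ) else 0) := by
    split_ifs with h
    · rw [← Finset.sum_range_succ (fun i => (A i : ℤ)), (by omega : t - m - 1 + 1 = t - m)]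
    · rw [(by omega : t - m = 0)]; simp
  rw [hS, div_eq_inv_mul, zero_mul, add_zero, one_mul]
  generalize (∑ i ∈ Finset.range (t - m - 1), (A i : ℤ)) = S3
  generalize (if m < t then (A (t - m - 1) : ℤ) else 0) = X
  generalize (∑ i ∈ Finset.range t, (A i : ℤ) * (A (i + 1) : ℤ)) = S2
  generalize (∑ i ∈ Finset.range t, (A (t + 1 + i) : ℤ) ^ 2) = S1
  generalize (A t : ℤ) * ((A t : ℤ) - 1) / 2 = S4
  have : S1 + S4 - S2 - (S3 + X) + (A t : ℤ) = ((A t : ℤ) - X) + (S1 + S4 - S2 - S3) := by ring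
  rw [this, zpow_add₀ hq]
  ring

/-- the multisum expression for `-q^{t-n} C_{n-1}^{(t,m)}(q)`
(the paper's `t, m` are `t+1, m+1` here, so `2t+1 = 2t+3`, `t+1 = t+2`). -/
theorem stmt12 (t m n : ℕ) (hmt : m ≤ t) (hn : 1 ≤ n) (q : ℂ)
    (hq0 : 0 < ‖q‖) (hq1 : ‖q‖ < 1) :
    (∑ l ∈ Finset.range (n + 1),
      q ^ ((t + 2) * l ^ 2 - l) * (1 - q ^ (2 * l)) /
          (qPoch q q (n - l) * qPoch q q (n + l)) *
        ∑ k ∈ Finset.Icc (-(l : ℤ)) ((l : ℤ) - 1),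
          (-1 : ℂ) ^ k * q ^ (-(2 * (t : ℤ) + 3) * k * (k + 1) / 2 + ((m : ℤ) + 1) * k)) =
    ∑ a ∈ Finset.univ.filter
        (fun a : Fin (2 * t + 1) → Fin (n + 1) =>
          ∀ i : Fin (2 * t), a i.castSucc ≤ a i.succ),
      CTermM q t m n (fun j => if h : j < 2 * t + 1 then (a ⟨j, h⟩ : ℕ) else 0) := by
  have hq : q ≠ 0 := norm_pos_iff.1 hq0
  have hL : (∑ l ∈ Finset.range (n + 1),
      q ^ ((t + 2) * l ^ 2 - l) * (1 - q ^ (2 * l)) /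
          (qPoch q q (n - l) * qPoch q q (n + l)) *
        ∑ k ∈ Finset.Icc (-(l : ℤ)) ((l : ℤ) - 1),
          (-1 : ℂ) ^ k * q ^ (-(2 * (t : ℤ) + 3) * k * (k + 1) / 2 + ((m : ℤ) + 1) * k))
      = VV q t m n (t + 1) n := by
    unfold VV
    apply Finset.sum_congr rfl
    intro l hl
    have hl' := Finset.mem_range.1 hl
    have e1 : (n : ℤ) - l = ((n - l : ℕ) : ℤ) := by omega
    have e2 : (n : ℤ) + l = ((n + l : ℕ) : ℤ) := by push_cast; ring
    have e3 : l ≤ (t + 2) * l ^ 2 := by nlinarith [Nat.le_self_pow (n := 2) (by norm_num) l]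
    have e4 : q ^ ((t + 2) * l ^ 2 - l) = q ^ ((l : ℤ) ^ 2 - l) * q ^ (((t + 1 : ℕ) : ℤ) * (l : ℤ) ^ 2) := by
      rw [← zpow_natCast, Nat.cast_sub e3, ← zpow_add₀ hq]
      congr 1; push_cast; ring
    have e5 : q ^ (2 * l) = q ^ (2 * (l : ℤ)) := by
      rw [← zpow_natCast]; push_cast; rfl
    rw [e1, e2, iq_nat, iq_nat, e4, e5]
    unfold aa CC cc
    rw [div_eq_mul_inv, mul_inv]
    ring
  rw [hL, ← ZZ_high q hq hq1 t m n hmt t n le_rfl, (by ring : t + 1 + t = 2 * t + 1), ZZ, ZZ,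
    ← chain _ _ n (2 * t) (fun y => ed q t (t - m - 1) 0 (2 * t) y n),
    ← chain _ _ n (2 * t) (fun y => ed q t (t - m) 1 (2 * t) y n), ← Finset.sum_sub_distrib,
    Finset.sum_filter]
  apply Finset.sum_congr rfl
  intro a _
  set A : ℕ → ℕ := fun j => if h : j < 2 * t + 1 then (a ⟨j, h⟩ : ℕ) else 0 with hA
  split_ifs with hmono
  · have hAle : ∀ j, A j ≤ n := by
      intro j
      simp only [hA]
      split_ifs with h
      · have := (a ⟨j, h⟩).2; omega
      · omega
    have hAm : ∀ j < 2 * t, A j ≤ A (j + 1) := by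
      intro j hj
      have := hmono ⟨j, hj⟩
      simp only [hA]
      rw [dif_pos (by omega), dif_pos (by omega)]
      exact this
    have hA0 : ((a 0 : Fin (n + 1)) : ℕ) = A 0 := by
      simp only [hA]; rw [dif_pos (by omega)]; rfl
    have hAl : ((a (Fin.last (2 * t)) : Fin (n + 1)) : ℕ) = A (2 * t) := by
      simp only [hA]; rw [dif_pos (by omega)]; rfl
    have hP : ∀ (p : ℕ) (c : ℤ), ∏ i : Fin (2 * t), ed q t p c i (a i.castSucc) (a i.succ) =
        ∏ i ∈ range (2 * t), ed q t p c i (A i) (A (i + 1)) := by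
      intro p c
      rw [Finset.prod_range]
      apply Finset.prod_congr rfl
      intro i _
      have h1 : ((a i.castSucc : Fin (n + 1)) : ℕ) = A i := by
        simp only [hA]; rw [dif_pos (by omega)]; rfl
      have h2 : ((a i.succ : Fin (n + 1)) : ℕ) = A (i + 1) := by
        simp only [hA]; rw [dif_pos (by omega)]; rfl
      rw [h1, h2]
    rw [hP, hP, hA0, hAl]
    exact (term_eq q hq t m n hmt A hAle hAm).symm
  · push Not at hmono
    obtain ⟨i, hi⟩ := hmono
    have hz : ∀ (p : ℕ) (c : ℤ), ∏ i : Fin (2 * t), ed q t p c i (a i.castSucc) (a i.succ) = 0 := by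
      intro p c
      apply Finset.prod_eq_zero (Finset.mem_univ i)
      have : ((a i.succ : Fin (n + 1)) : ℕ) < (a i.castSucc : ℕ) := hi
      rw [ed, iq_neg q (by omega), zero_mul]
    rw [hz, hz]; simp
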